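/- Let φ(x) be a formula of the correspondence language, let k = r(φ(x)) be its degree, and suppose φ(x) is invariant with respect to (2,2)-modal k-asimulations. Then φ(x) is logically equivalent to the (2,2)-standard x-translation of some modal intuitionistic formula. -/

import Mathlib

namespace ModalIntAsim

/-- Binary relation symbols of the correspondence vocabulary: R, R_□, R_◇. -/
inductive RelSym : Type
  | r | box | diam
deriving DecidableEq

/-- Formulas of the correspondence language: classical first-order logic without
identity, with variables indexed by `ℕ`, unary predicate letters `P n` (n : ℕ),
and the three binary relation symbols. -/
inductive FOForm : Type
  | falsum : FOForm
  | pred : ℕ → ℕ → FOForm            -- `pred n v` is `P_n(x_v)`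
  | rel : RelSym → ℕ → ℕ → FOForm    -- `rel s v w` is `S(x_v, x_w)`
  | conj : FOForm → FOForm → FOForm
  | disj : FOForm → FOForm → FOForm
  | impl : FOForm → FOForm → FOForm
  | all : ℕ → FOForm → FOForm
  | ex : ℕ → FOForm → FOForm

namespace FOForm

/-- Free variables of a correspondence formula. -/
def freeVars : FOForm → Finset ℕ
  | falsum => ∅
  | pred _ v => {v}
  | rel _ v w => {v, w}
  | conj f g => f.freeVars ∪ g.freeVars
  | disj f g => f.freeVars ∪ g.freeVars
  | impl f g => f.freeVars ∪ g.freeVars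
  | all v f => f.freeVars \ {v}
  | ex v f => f.freeVars \ {v}

/-- The unary predicate letters occurring in a formula (the binary relation
symbols R, R_□, R_◇ are regarded as belonging to every vocabulary Σ_φ). -/
def predLetters : FOForm → Finset ℕ
  | falsum => ∅
  | pred n _ => {n}
  | rel _ _ _ => ∅
  | conj f g => f.predLetters ∪ g.predLetters
  | disj f g => f.predLetters ∪ g.predLetters
  | impl f g => f.predLetters ∪ g.predLetters
  | all _ f => f.predLetters
  | ex _ f => f.predLetters

/-- Degree of a formula: the greatest number of nested quantifiers. -/
def degree : FOForm → ℕ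
  | falsum => 0
  | pred _ _ => 0
  | rel _ _ _ => 0
  | conj f g => max f.degree g.degree
  | disj f g => max f.degree g.degree
  | impl f g => max f.degree g.degree
  | all _ f => f.degree + 1
  | ex _ f => f.degree + 1

end FOForm

/-- A model of the correspondence language: a domain together with
interpretations of R, R_□, R_◇ and of the unary predicate letters.
(A Θ-model only consults the letters in Θ.) -/
structure Model : Type 1 where
  U : Type
  rel : U → U → Prop
  relBox : U → U → Prop
  relDiam : U → U → Prop
  pred : ℕ → U → Prop

/-- Interpretation of a binary relation symbol in a model. -/
def Model.relOf (M : Model) : RelSym → M.U → M.U → Prop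
  | .r => M.rel
  | .box => M.relBox
  | .diam => M.relDiam

/-- Tarskian satisfaction of a formula in a model under an assignment. -/
def Sat (M : Model) : FOForm → (ℕ → M.U) → Prop
  | .falsum, _ => False
  | .pred n v, α => M.pred n (α v)
  | .rel s v w, α => M.relOf s (α v) (α w)
  | .conj f g, α => Sat M f α ∧ Sat M g α
  | .disj f g, α => Sat M f α ∨ Sat M g α
  | .impl f g, α => Sat M f α → Sat M g α
  | .all v f, α => ∀ u : M.U, Sat M f (Function.update α v u)
  | .ex v f, α => ∃ u : M.U, Sat M f (Function.update α v u)

/-- `M, a ⊨ φ(x)`: φ is true in `M` under any assignment sending `x` to `a`. -/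
def SatAt (M : Model) (a : M.U) (x : ℕ) (φ : FOForm) : Prop :=
  ∀ α : ℕ → M.U, α x = a → Sat M φ α

/-- Logical equivalence of correspondence formulas. -/
def Equiv (φ ψ : FOForm) : Prop :=
  ∀ (M : Model) (α : ℕ → M.U), Sat M φ α ↔ Sat M ψ α

/-- Logical entailment between correspondence formulas. -/
def Entails (φ ψ : FOForm) : Prop :=
  ∀ (M : Model) (α : ℕ → M.U), Sat M φ α → Sat M ψ α

/-- Modal intuitionistic formulas: built from propositional letters `p n`
using ⊥, ∧, ∨, →, □, ◇. -/
inductive MForm : Type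
  | bot : MForm
  | prop : ℕ → MForm
  | conj : MForm → MForm → MForm
  | disj : MForm → MForm → MForm
  | impl : MForm → MForm → MForm
  | box : MForm → MForm
  | diam : MForm → MForm

/-- The (i,j)-standard x-translation `ST_ij`.  `boxOne = true` means the box
clause (□₁) is used (i = 1), `boxOne = false` means (□₂) (i = 2); likewise
`diamOne = true` means the diamond clause (◇₁) (j = 1) and `diamOne = false`
means (◇₂) (j = 2).  Bound variables are chosen fresh as `x+1`, `x+2`. -/
def ST (boxOne diamOne : Bool) : MForm → ℕ → FOForm
  | .bot, _ => .falsum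
  | .prop n, x => .pred n x
  | .conj I J, x => .conj (ST boxOne diamOne I x) (ST boxOne diamOne J x)
  | .disj I J, x => .disj (ST boxOne diamOne I x) (ST boxOne diamOne J x)
  | .impl I J, x =>
      .all (x + 1) (.impl (.rel .r x (x + 1))
        (.impl (ST boxOne diamOne I (x + 1)) (ST boxOne diamOne J (x + 1))))
  | .box I, x =>
      if boxOne then
        .all (x + 1) (.impl (.rel .box x (x + 1)) (ST boxOne diamOne I (x + 1)))
      else
        .all (x + 1) (.impl (.rel .r x (x + 1))
          (.all (x + 2) (.impl (.rel .box (x + 1) (x + 2)) (ST boxOne diamOne I (x + 2)))))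
  | .diam I, x =>
      if diamOne then
        .ex (x + 1) (.conj (.rel .diam x (x + 1)) (ST boxOne diamOne I (x + 1)))
      else
        .all (x + 1) (.impl (.rel .r x (x + 1))
          (.ex (x + 2) (.conj (.rel .diam (x + 1) (x + 2)) (ST boxOne diamOne I (x + 2)))))

/-! ### Conditions on relations between tuples (the k-asimulation conditions).
A relation between the two models is represented by its two directed
components; `N` is the model of the source tuple and `P` that of the target
tuple.  A tuple `(ā_m, a)` is represented as the list `as ++ [a]`, with
`m = as.length`. -/

section TupleConds

variable (N P : Model)

/-- The "p-type" condition: related tuples are nonempty and of equal length. -/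
def TypeCond (A : List N.U → List P.U → Prop) : Prop :=
  ∀ as bs, A as bs → as ≠ [] ∧ as.length = bs.length

/-- (p-base). -/
def BaseCond (Θ : Set ℕ) (A : List N.U → List P.U → Prop) : Prop :=
  ∀ (as : List N.U) (bs : List P.U) (a : N.U) (b : P.U),
    A (as ++ [a]) (bs ++ [b]) → ∀ n ∈ Θ, N.pred n a → P.pred n b

/-- (p-step). -/
def StepCond (k : ℕ) (A : List N.U → List P.U → Prop)
    (Arev : List P.U → List N.U → Prop) : Prop :=
  ∀ (as : List N.U) (bs : List P.U) (a : N.U) (b d : P.U),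
    A (as ++ [a]) (bs ++ [b]) → P.rel b d → as.length < k →
    ∃ c : N.U, N.rel a c ∧ A (as ++ [a, c]) (bs ++ [b, d]) ∧
      Arev (bs ++ [b, d]) (as ++ [a, c])

/-- (p-box-1). -/
def Box1Cond (k : ℕ) (A : List N.U → List P.U → Prop) : Prop :=
  ∀ (as : List N.U) (bs : List P.U) (a : N.U) (b d : P.U),
    A (as ++ [a]) (bs ++ [b]) → P.relBox b d → as.length < k →
    ∃ c : N.U, N.relBox a c ∧ A (as ++ [a, c]) (bs ++ [b, d])

/-- (p-box-2). -/
def Box2Cond (k : ℕ) (A : List N.U → List P.U → Prop) : Prop :=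
  ∀ (as : List N.U) (bs : List P.U) (a : N.U) (b d f : P.U),
    A (as ++ [a]) (bs ++ [b]) → P.rel b d → P.relBox d f → as.length + 1 < k →
    ∃ c e : N.U, N.rel a c ∧ N.relBox c e ∧ A (as ++ [a, c, e]) (bs ++ [b, d, f])

/-- (p-diam-1). -/
def Diam1Cond (k : ℕ) (A : List N.U → List P.U → Prop) : Prop :=
  ∀ (as : List N.U) (bs : List P.U) (a c : N.U) (b : P.U),
    A (as ++ [a]) (bs ++ [b]) → N.relDiam a c → as.length < k →
    ∃ d : P.U, P.relDiam b d ∧ A (as ++ [a, c]) (bs ++ [b, d])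

/-- (p-diam-2(1)). -/
def Diam2aCond (k : ℕ) (A B : List N.U → List P.U → Prop) : Prop :=
  ∀ (as : List N.U) (bs : List P.U) (a : N.U) (b d : P.U),
    A (as ++ [a]) (bs ++ [b]) → P.rel b d → as.length + 1 < k →
    ∃ c : N.U, N.rel a c ∧ B (as ++ [a, c]) (bs ++ [b, d])

/-- (p-diam-2(2)). -/
def Diam2bCond (k : ℕ) (B A : List N.U → List P.U → Prop) : Prop :=
  ∀ (as : List N.U) (bs : List P.U) (a c : N.U) (b : P.U),
    B (as ++ [a]) (bs ++ [b]) → N.relDiam a c → as.length < k →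
    ∃ d : P.U, P.relDiam b d ∧ A (as ++ [a, c]) (bs ++ [b, d])

end TupleConds

/-- An (i,1)-modal ⟨(M₁,t),(M₂,u)⟩_k-asimulation (j = 1): a single relation `A`
given by its two directed components `A12`, `A21`. -/
def IsKAsimD1 (boxOne : Bool) (Θ : Set ℕ) (M₁ M₂ : Model) (t : M₁.U) (u : M₂.U) (k : ℕ)
    (A12 : List M₁.U → List M₂.U → Prop) (A21 : List M₂.U → List M₁.U → Prop) : Prop :=
  TypeCond M₁ M₂ A12 ∧ TypeCond M₂ M₁ A21 ∧
  A12 [t] [u] ∧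
  BaseCond M₁ M₂ Θ A12 ∧ BaseCond M₂ M₁ Θ A21 ∧
  StepCond M₁ M₂ k A12 A21 ∧ StepCond M₂ M₁ k A21 A12 ∧
  (if boxOne then Box1Cond M₁ M₂ k A12 ∧ Box1Cond M₂ M₁ k A21
   else Box2Cond M₁ M₂ k A12 ∧ Box2Cond M₂ M₁ k A21) ∧
  Diam1Cond M₁ M₂ k A12 ∧ Diam1Cond M₂ M₁ k A21

/-- An (i,2)-modal ⟨(M₁,t),(M₂,u)⟩_k-asimulation (j = 2): an ordered pair
(A, B) of relations, each given by its two directed components. -/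
def IsKAsimD2 (boxOne : Bool) (Θ : Set ℕ) (M₁ M₂ : Model) (t : M₁.U) (u : M₂.U) (k : ℕ)
    (A12 : List M₁.U → List M₂.U → Prop) (A21 : List M₂.U → List M₁.U → Prop)
    (B12 : List M₁.U → List M₂.U → Prop) (B21 : List M₂.U → List M₁.U → Prop) : Prop :=
  TypeCond M₁ M₂ A12 ∧ TypeCond M₂ M₁ A21 ∧
  TypeCond M₁ M₂ B12 ∧ TypeCond M₂ M₁ B21 ∧
  A12 [t] [u] ∧
  BaseCond M₁ M₂ Θ A12 ∧ BaseCond M₂ M₁ Θ A21 ∧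
  StepCond M₁ M₂ k A12 A21 ∧ StepCond M₂ M₁ k A21 A12 ∧
  (if boxOne then Box1Cond M₁ M₂ k A12 ∧ Box1Cond M₂ M₁ k A21
   else Box2Cond M₁ M₂ k A12 ∧ Box2Cond M₂ M₁ k A21) ∧
  Diam2aCond M₁ M₂ k A12 B12 ∧ Diam2aCond M₂ M₁ k A21 B21 ∧
  Diam2bCond M₁ M₂ k B12 A12 ∧ Diam2bCond M₂ M₁ k B21 A21

/-- φ(x) is invariant with respect to (i,1)-modal k-asimulations. -/
def KInvariantD1 (boxOne : Bool) (x : ℕ) (φ : FOForm) (k : ℕ) : Prop :=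
  ∀ Θ : Set ℕ, (φ.predLetters : Set ℕ) ⊆ Θ →
  ∀ (M₁ M₂ : Model) (t : M₁.U) (u : M₂.U)
    (A12 : List M₁.U → List M₂.U → Prop) (A21 : List M₂.U → List M₁.U → Prop),
    IsKAsimD1 boxOne Θ M₁ M₂ t u k A12 A21 →
    ∀ (a : M₁.U) (b : M₂.U), A12 [a] [b] → SatAt M₁ a x φ → SatAt M₂ b x φ

/-- φ(x) is invariant with respect to (i,2)-modal k-asimulations. -/
def KInvariantD2 (boxOne : Bool) (x : ℕ) (φ : FOForm) (k : ℕ) : Prop :=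
  ∀ Θ : Set ℕ, (φ.predLetters : Set ℕ) ⊆ Θ →
  ∀ (M₁ M₂ : Model) (t : M₁.U) (u : M₂.U)
    (A12 : List M₁.U → List M₂.U → Prop) (A21 : List M₂.U → List M₁.U → Prop)
    (B12 : List M₁.U → List M₂.U → Prop) (B21 : List M₂.U → List M₁.U → Prop),
    IsKAsimD2 boxOne Θ M₁ M₂ t u k A12 A21 B12 B21 →
    ∀ (a : M₁.U) (b : M₂.U), A12 [a] [b] → SatAt M₁ a x φ → SatAt M₂ b x φ

/-! ### Conditions for asimulations *simpliciter* (relations between elements). -/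

section ElemConds

variable (N P : Model)

/-- (base). -/
def BaseCondE (Θ : Set ℕ) (A : N.U → P.U → Prop) : Prop :=
  ∀ (a : N.U) (b : P.U), A a b → ∀ n ∈ Θ, N.pred n a → P.pred n b

/-- (step). -/
def StepCondE (A : N.U → P.U → Prop) (Arev : P.U → N.U → Prop) : Prop :=
  ∀ (a : N.U) (b d : P.U), A a b → P.rel b d →
    ∃ c : N.U, N.rel a c ∧ A c d ∧ Arev d c

/-- (box-1). -/
def Box1CondE (A : N.U → P.U → Prop) : Prop :=
  ∀ (a : N.U) (b d : P.U), A a b → P.relBox b d →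
    ∃ c : N.U, N.relBox a c ∧ A c d

/-- (box-2). -/
def Box2CondE (A : N.U → P.U → Prop) : Prop :=
  ∀ (a : N.U) (b d f : P.U), A a b → P.rel b d → P.relBox d f →
    ∃ c e : N.U, N.rel a c ∧ N.relBox c e ∧ A e f

/-- (diam-1). -/
def Diam1CondE (A : N.U → P.U → Prop) : Prop :=
  ∀ (a c : N.U) (b : P.U), A a b → N.relDiam a c →
    ∃ d : P.U, P.relDiam b d ∧ A c d

/-- (diam-2(1)). -/
def Diam2aCondE (A B : N.U → P.U → Prop) : Prop :=
  ∀ (a : N.U) (b d : P.U), A a b → P.rel b d →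
    ∃ c : N.U, N.rel a c ∧ B c d

/-- (diam-2(2)). -/
def Diam2bCondE (B A : N.U → P.U → Prop) : Prop :=
  ∀ (a c : N.U) (b : P.U), B a b → N.relDiam a c →
    ∃ d : P.U, P.relDiam b d ∧ A c d

end ElemConds

/-- An (i,1)-modal ⟨(M₁,t),(M₂,u)⟩-asimulation (j = 1). -/
def IsAsimD1 (boxOne : Bool) (Θ : Set ℕ) (M₁ M₂ : Model) (t : M₁.U) (u : M₂.U)
    (A12 : M₁.U → M₂.U → Prop) (A21 : M₂.U → M₁.U → Prop) : Prop :=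
  A12 t u ∧
  BaseCondE M₁ M₂ Θ A12 ∧ BaseCondE M₂ M₁ Θ A21 ∧
  StepCondE M₁ M₂ A12 A21 ∧ StepCondE M₂ M₁ A21 A12 ∧
  (if boxOne then Box1CondE M₁ M₂ A12 ∧ Box1CondE M₂ M₁ A21
   else Box2CondE M₁ M₂ A12 ∧ Box2CondE M₂ M₁ A21) ∧
  Diam1CondE M₁ M₂ A12 ∧ Diam1CondE M₂ M₁ A21

/-- An (i,2)-modal ⟨(M₁,t),(M₂,u)⟩-asimulation (j = 2). -/
def IsAsimD2 (boxOne : Bool) (Θ : Set ℕ) (M₁ M₂ : Model) (t : M₁.U) (u : M₂.U)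
    (A12 : M₁.U → M₂.U → Prop) (A21 : M₂.U → M₁.U → Prop)
    (B12 : M₁.U → M₂.U → Prop) (B21 : M₂.U → M₁.U → Prop) : Prop :=
  A12 t u ∧
  BaseCondE M₁ M₂ Θ A12 ∧ BaseCondE M₂ M₁ Θ A21 ∧
  StepCondE M₁ M₂ A12 A21 ∧ StepCondE M₂ M₁ A21 A12 ∧
  (if boxOne then Box1CondE M₁ M₂ A12 ∧ Box1CondE M₂ M₁ A21
   else Box2CondE M₁ M₂ A12 ∧ Box2CondE M₂ M₁ A21) ∧
  Diam2aCondE M₁ M₂ A12 B12 ∧ Diam2aCondE M₂ M₁ A21 B21 ∧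
  Diam2bCondE M₁ M₂ B12 A12 ∧ Diam2bCondE M₂ M₁ B21 A21

/-- φ(x) is invariant with respect to (i,1)-modal asimulations. -/
def InvariantD1 (boxOne : Bool) (x : ℕ) (φ : FOForm) : Prop :=
  ∀ Θ : Set ℕ, (φ.predLetters : Set ℕ) ⊆ Θ →
  ∀ (M₁ M₂ : Model) (t : M₁.U) (u : M₂.U)
    (A12 : M₁.U → M₂.U → Prop) (A21 : M₂.U → M₁.U → Prop),
    IsAsimD1 boxOne Θ M₁ M₂ t u A12 A21 →
    ∀ (a : M₁.U) (b : M₂.U), A12 a b → SatAt M₁ a x φ → SatAt M₂ b x φ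

/-- φ(x) is invariant with respect to (i,2)-modal asimulations. -/
def InvariantD2 (boxOne : Bool) (x : ℕ) (φ : FOForm) : Prop :=
  ∀ Θ : Set ℕ, (φ.predLetters : Set ℕ) ⊆ Θ →
  ∀ (M₁ M₂ : Model) (t : M₁.U) (u : M₂.U)
    (A12 : M₁.U → M₂.U → Prop) (A21 : M₂.U → M₁.U → Prop)
    (B12 : M₁.U → M₂.U → Prop) (B21 : M₂.U → M₁.U → Prop),
    IsAsimD2 boxOne Θ M₁ M₂ t u A12 A21 B12 B21 →
    ∀ (a : M₁.U) (b : M₂.U), A12 a b → SatAt M₁ a x φ → SatAt M₂ b x φ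

/-! ### Types, complete conjunctions, ω-saturation. -/

/-- `int(φ,x,l)`: the set of (2,2)-standard x-translations of modal
intuitionistic formulas which are (Σ_φ,x,l)-formulas. -/
def intSet (φ : FOForm) (x l : ℕ) : Set FOForm :=
  {ψ | (∃ I : MForm, ψ = ST false false I x) ∧
    ψ.predLetters ⊆ φ.predLetters ∧ ψ.freeVars ⊆ {x} ∧ ψ.degree ≤ l}

/-- `tp_l(φ(x),M,a)`. -/
def tpSet (φ : FOForm) (x l : ℕ) (M : Model) (a : M.U) : Set FOForm :=
  {ψ | ψ ∈ intSet φ x l ∧ SatAt M a x ψ}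

/-- Conjunction of a nonempty list of formulas. -/
def listConj : FOForm → List FOForm → FOForm
  | ψ, [] => ψ
  | ψ, χ :: L => FOForm.conj ψ (listConj χ L)

/-- Ψ(x) is a complete (φ,x,k)-conjunction. -/
def IsCompleteConj (φ : FOForm) (x k : ℕ) (Ψ : FOForm) : Prop :=
  (∃ (ψ₀ : FOForm) (L : List FOForm), ψ₀ ∈ intSet φ x k ∧
    (∀ χ ∈ L, χ ∈ intSet φ x k) ∧ Ψ = listConj ψ₀ L) ∧
  ∃ (M : Model) (a : M.U), SatAt M a x (FOForm.conj Ψ φ) ∧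
    ∀ ψ ∈ tpSet φ x k M a, Entails Ψ ψ

/-- `int_x(Θ)` for the (i,j)-standard translation. -/
def intX (Θ : Set ℕ) (boxOne diamOne : Bool) (x : ℕ) : Set FOForm :=
  {ψ | (∃ I : MForm, ψ = ST boxOne diamOne I x) ∧ (ψ.predLetters : Set ℕ) ⊆ Θ}

/-- `tp_x(M,t)` for the (i,j)-standard translation. -/
def tpX (Θ : Set ℕ) (boxOne diamOne : Bool) (x : ℕ) (M : Model) (t : M.U) : Set FOForm :=
  {ψ | ψ ∈ intX Θ boxOne diamOne x ∧ SatAt M t x ψ}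

/-- `imp_x(M,t) = ⋂ { t̄p_x(M,u) : t R_◇ u }` (for the (2,2)-translation). -/
def impX (Θ : Set ℕ) (x : ℕ) (M : Model) (t : M.U) : Set FOForm :=
  {ψ | ψ ∈ intX Θ false false x ∧ ∀ u : M.U, M.relDiam t u → ¬ SatAt M u x ψ}

/-- ω-saturation: for every finite tuple of parameters (the first `n` values of
an assignment `α`) and every set `Γ` of formulas with finitely many free
variables beyond the parameters, if `Γ` is consistent with the first-order
theory of `[M,ā]` (i.e. satisfiable together with it in some model), then `Γ`
is realized in `[M,ā]`. -/
def OmegaSaturated (M : Model) : Prop :=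
  ∀ (n : ℕ) (α : ℕ → M.U) (Γ : Set FOForm),
    (∃ k : ℕ, ∀ γ ∈ Γ, γ.freeVars ⊆ Finset.range (n + k)) →
    (∃ (N : Model) (β : ℕ → N.U),
      (∀ ψ : FOForm, ψ.freeVars ⊆ Finset.range n → Sat M ψ α → Sat N ψ β) ∧
      ∀ γ ∈ Γ, Sat N γ β) →
    ∃ α' : ℕ → M.U, (∀ i < n, α' i = α i) ∧ ∀ γ ∈ Γ, Sat M γ α'

/-! ### Relativization to a class κ of models. -/

/-- κ(Θ) is first-order axiomatizable for every finite Θ (with R ∈ Θ): for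
every finite set `S` of unary predicate letters there is a set of Θ-sentences
axiomatizing membership in κ. -/
def FinAxiomatizable (κ : Set Model) : Prop :=
  ∀ S : Finset ℕ, ∃ Ax : Set FOForm,
    (∀ ψ ∈ Ax, ψ.freeVars = ∅ ∧ (ψ.predLetters : Set ℕ) ⊆ (S : Set ℕ)) ∧
    ∀ M : Model, M ∈ κ ↔ ∀ ψ ∈ Ax, ∀ α : ℕ → M.U, Sat M ψ α

/-- φ κ-follows from ψ: {ψ, ¬φ} is not κ-satisfiable. -/
def KappaFollows (κ : Set Model) (ψ φ : FOForm) : Prop :=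
  ¬ ∃ M : Model, M ∈ κ ∧ ∃ α : ℕ → M.U, Sat M ψ α ∧ ¬ Sat M φ α

/-- κ-equivalence of formulas. -/
def KappaEquiv (κ : Set Model) (φ ψ : FOForm) : Prop :=
  KappaFollows κ φ ψ ∧ KappaFollows κ ψ φ

/-- φ(x) is κ-invariant with respect to (i,1)-modal asimulations. -/
def KappaInvariantD1 (κ : Set Model) (boxOne : Bool) (x : ℕ) (φ : FOForm) : Prop :=
  ∀ Θ : Set ℕ, (φ.predLetters : Set ℕ) ⊆ Θ →
  ∀ (M₁ M₂ : Model), M₁ ∈ κ → M₂ ∈ κ →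
  ∀ (t : M₁.U) (u : M₂.U)
    (A12 : M₁.U → M₂.U → Prop) (A21 : M₂.U → M₁.U → Prop),
    IsAsimD1 boxOne Θ M₁ M₂ t u A12 A21 →
    ∀ (a : M₁.U) (b : M₂.U), A12 a b → SatAt M₁ a x φ → SatAt M₂ b x φ

/-- φ(x) is κ-invariant with respect to (i,2)-modal asimulations. -/
def KappaInvariantD2 (κ : Set Model) (boxOne : Bool) (x : ℕ) (φ : FOForm) : Prop :=
  ∀ Θ : Set ℕ, (φ.predLetters : Set ℕ) ⊆ Θ →
  ∀ (M₁ M₂ : Model), M₁ ∈ κ → M₂ ∈ κ →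
  ∀ (t : M₁.U) (u : M₂.U)
    (A12 : M₁.U → M₂.U → Prop) (A21 : M₂.U → M₁.U → Prop)
    (B12 : M₁.U → M₂.U → Prop) (B21 : M₂.U → M₁.U → Prop),
    IsAsimD2 boxOne Θ M₁ M₂ t u A12 A21 B12 B21 →
    ∀ (a : M₁.U) (b : M₂.U), A12 a b → SatAt M₁ a x φ → SatAt M₂ b x φ

/-- φ(x) is κ-invariant with respect to (i,j)-modal asimulations
(`diamOne = true` means j = 1). -/
def KappaInvariant (κ : Set Model) (boxOne diamOne : Bool) (x : ℕ) (φ : FOForm) : Prop :=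
  if diamOne then KappaInvariantD1 κ boxOne x φ else KappaInvariantD2 κ boxOne x φ

/-!
A set closed under a preorder is a union of principal up-sets. Let `p` be below `q` if every modal
property of depth at most `k` in the letters of `φ` passes from the pointed model `p` to `q`. Only
finitely many such properties exist and they form a bounded lattice, so principal up-sets, and
hence all up-sets, are again such properties. This makes preservation of properties, with the depth
dropping by one for each point appended to a tuple, a `k`-asimulation: a failing clause would yield
properties of depth `l` whose implication, box or diamond, of depth `l + 1`, is not preserved. An
invariant `φ` therefore defines an up-set, that is, a modal property.
-/

section FiniteSublattice

variable {α : Type*} {D D' : Set (Set α)} {p q r : α}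

/-- The specialization preorder of a family `D` of properties: `q` has every property in `D`
that `p` has. -/
def Preserves (D : Set (Set α)) (p q : α) : Prop :=
  ∀ X ∈ D, p ∈ X → q ∈ X

theorem Preserves.refl (D : Set (Set α)) (p : α) : Preserves D p p :=
  fun _ _ hp => hp

theorem Preserves.trans (hpq : Preserves D p q) (hqr : Preserves D q r) : Preserves D p r :=
  fun X hX hp => hqr X hX (hpq X hX hp)

theorem Preserves.anti (hpq : Preserves D' p q) (hD : D ⊆ D') : Preserves D p q :=
  fun X hX => hpq X (hD hX)

theorem mem_of_preserves_closed (hD : IsSublattice D) (hfin : D.Finite)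
    (hempty : ∅ ∈ D) (huniv : Set.univ ∈ D) {F : Set α}
    (hF : ∀ p q, Preserves D p q → p ∈ F → q ∈ F) : F ∈ D := by
  let least (p : α) : Set α := ⋂₀ {X ∈ D | p ∈ X}
  have least_mem (p : α) : least p ∈ D :=
    hD.infClosed.sInf_mem (hfin.subset (Set.sep_subset _ _)) huniv (Set.sep_subset _ _)
  have hsub : least '' F ⊆ D := Set.image_subset_iff.2 fun p _ => least_mem p
  have hF_eq : F = ⋃₀ (least '' F) := by
    refine Set.Subset.antisymm
      (fun p hp => ⟨least p, Set.mem_image_of_mem least hp, fun X hX => hX.2⟩) ?_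
    rintro q ⟨_, ⟨p, hp, rfl⟩, hq⟩
    exact hF p q (fun X hX hpX => hq X ⟨hX, hpX⟩) hp
  rw [hF_eq]
  exact hD.supClosed.sSup_mem (hfin.subset hsub) hempty hsub

end FiniteSublattice

section ModalSemantics

/-- Pointed models; a set of them is the semantic counterpart of a formula in one free variable. -/
abbrev PointedModel : Type 1 := (M : Model) × M.U

/-- The model `M` pointed at `a`. -/
abbrev Model.pt (M : Model) (a : M.U) : PointedModel := ⟨M, a⟩

/-- The relation along which `□` quantifies: `R_□` under clause (□₁), and `R` followed by `R_□`
under clause (□₂). -/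
def Model.boxRel (M : Model) (boxOne : Bool) : M.U → M.U → Prop :=
  if boxOne then M.relBox else Relation.Comp M.rel M.relBox

/-- The pointed models satisfying the propositional letter `p n`. -/
def letterSet (n : ℕ) : Set PointedModel :=
  {p | p.1.pred n p.2}

/-- Intuitionistic implication on sets of pointed models. -/
def impSet (X Y : Set PointedModel) : Set PointedModel :=
  {p | ∀ y, p.1.rel p.2 y → p.1.pt y ∈ X → p.1.pt y ∈ Y}

/-- The modality `□` on sets of pointed models. -/
def boxSet (boxOne : Bool) (X : Set PointedModel) : Set PointedModel :=
  {p | ∀ z, p.1.boxRel boxOne p.2 z → p.1.pt z ∈ X}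

/-- The modality `◇` on sets of pointed models, under clause (◇₂). -/
def diamSet (X : Set PointedModel) : Set PointedModel :=
  {p | ∀ y, p.1.rel p.2 y → ∃ z, p.1.relDiam y z ∧ p.1.pt z ∈ X}

/-- The pointed models forcing a modal formula, under clause (◇₂). -/
def MForm.extension (boxOne : Bool) : MForm → Set PointedModel
  | .bot => ∅
  | .prop n => letterSet n
  | .conj I J => I.extension boxOne ∩ J.extension boxOne
  | .disj I J => I.extension boxOne ∪ J.extension boxOne
  | .impl I J => impSet (I.extension boxOne) (J.extension boxOne)
  | .box I => boxSet boxOne (I.extension boxOne)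
  | .diam I => diamSet (I.extension boxOne)

theorem sat_ST_iff_mem_extension {boxOne : Bool} {M : Model} (I : MForm) (x : ℕ) (α : ℕ → M.U) :
    Sat M (ST boxOne false I x) α ↔ M.pt (α x) ∈ I.extension boxOne := by
  induction I generalizing x α with
  | bot => exact Iff.rfl
  | prop n => exact Iff.rfl
  | conj I J ihI ihJ => exact and_congr (ihI x α) (ihJ x α)
  | disj I J ihI ihJ => exact or_congr (ihI x α) (ihJ x α)
  | impl I J ihI ihJ => simp [ST, Sat, MForm.extension, impSet, Model.relOf, ihI, ihJ]
  | box I ih =>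
    cases boxOne
    · have hsat : Sat M (ST false false (.box I) x) α ↔
          ∀ y, M.rel (α x) y → ∀ z, M.relBox y z → M.pt z ∈ I.extension false := by
        simp [ST, Sat, Model.relOf, ih]
      exact hsat.trans
        ⟨fun h z ⟨y, hy, hz⟩ => h y hy z hz, fun h y hy z hz => h z ⟨y, hy, hz⟩⟩
    · simp [ST, Sat, MForm.extension, boxSet, Model.boxRel, Model.relOf, ih]
  | diam I ih => simp [ST, Sat, MForm.extension, diamSet, Model.relOf, ih]

theorem isSublattice_range_extension (boxOne : Bool) :
    IsSublattice (Set.range (MForm.extension boxOne)) where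
  supClosed := by
    rintro _ ⟨I, rfl⟩ _ ⟨J, rfl⟩
    exact ⟨.disj I J, rfl⟩
  infClosed := by
    rintro _ ⟨I, rfl⟩ _ ⟨J, rfl⟩
    exact ⟨.conj I J, rfl⟩

theorem extension_impl_bot_bot (boxOne : Bool) :
    (MForm.impl .bot .bot).extension boxOne = Set.univ :=
  Set.eq_univ_of_forall fun _ _ _ hbot => hbot

end ModalSemantics

section DefinableSets

variable {boxOne : Bool} {S : Set ℕ} {l : ℕ}

/-- The sets of pointed models definable by a modal formula with letters in `S` and at most `l`
nested occurrences of `→`, `□`, `◇`, where `⊤` counts as depth `0`. They are generated as sets, not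
as formulas, so that each level is finite. -/
def definableSets (boxOne : Bool) (S : Set ℕ) : ℕ → Set (Set PointedModel)
  | 0 => latticeClosure ({∅, Set.univ} ∪ letterSet '' S)
  | l + 1 => latticeClosure (definableSets boxOne S l ∪
      Set.image2 impSet (definableSets boxOne S l) (definableSets boxOne S l) ∪
      boxSet boxOne '' definableSets boxOne S l ∪ diamSet '' definableSets boxOne S l)

theorem finite_definableSets (hS : S.Finite) (l : ℕ) : (definableSets boxOne S l).Finite := by
  induction l with
  | zero => exact ((Set.toFinite _).union (hS.image _)).latticeClosure
  | succ l ih =>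
    exact (((ih.union (ih.image2 _ ih)).union (ih.image _)).union (ih.image _)).latticeClosure

theorem isSublattice_definableSets (boxOne : Bool) (S : Set ℕ) (l : ℕ) :
    IsSublattice (definableSets boxOne S l) := by
  cases l <;> exact isSublattice_latticeClosure

theorem monotone_definableSets (boxOne : Bool) (S : Set ℕ) : Monotone (definableSets boxOne S) :=
  monotone_nat_of_le_succ fun _ _ hX => subset_latticeClosure (.inl (.inl (.inl hX)))

theorem empty_mem_definableSets (boxOne : Bool) (S : Set ℕ) (l : ℕ) :
    ∅ ∈ definableSets boxOne S l :=
  monotone_definableSets boxOne S l.zero_le (subset_latticeClosure (.inl (.inl rfl)))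

theorem univ_mem_definableSets (boxOne : Bool) (S : Set ℕ) (l : ℕ) :
    Set.univ ∈ definableSets boxOne S l :=
  monotone_definableSets boxOne S l.zero_le (subset_latticeClosure (.inl (.inr rfl)))

theorem letterSet_mem_definableSets {n : ℕ} (hn : n ∈ S) :
    letterSet n ∈ definableSets boxOne S l :=
  monotone_definableSets boxOne S l.zero_le (subset_latticeClosure (.inr ⟨n, hn, rfl⟩))

theorem impSet_mem_definableSets {X Y : Set PointedModel} (hX : X ∈ definableSets boxOne S l)
    (hY : Y ∈ definableSets boxOne S l) : impSet X Y ∈ definableSets boxOne S (l + 1) :=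
  subset_latticeClosure (.inl (.inl (.inr ⟨X, hX, Y, hY, rfl⟩)))

theorem boxSet_mem_definableSets {X : Set PointedModel} (hX : X ∈ definableSets boxOne S l) :
    boxSet boxOne X ∈ definableSets boxOne S (l + 1) :=
  subset_latticeClosure (.inl (.inr ⟨X, hX, rfl⟩))

theorem diamSet_mem_definableSets {X : Set PointedModel} (hX : X ∈ definableSets boxOne S l) :
    diamSet X ∈ definableSets boxOne S (l + 1) :=
  subset_latticeClosure (.inr ⟨X, hX, rfl⟩)

theorem definableSets_subset_range_extension (boxOne : Bool) (S : Set ℕ) (l : ℕ) :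
    definableSets boxOne S l ⊆ Set.range (MForm.extension boxOne) := by
  induction l with
  | zero =>
    refine latticeClosure_min ?_ (isSublattice_range_extension boxOne)
    rintro _ ((rfl | rfl) | ⟨n, -, rfl⟩)
    · exact ⟨.bot, rfl⟩
    · exact ⟨.impl .bot .bot, extension_impl_bot_bot boxOne⟩
    · exact ⟨.prop n, rfl⟩
  | succ l ih =>
    refine latticeClosure_min ?_ (isSublattice_range_extension boxOne)
    rintro _ (((hX | ⟨X, hX, Y, hY, rfl⟩) | ⟨X, hX, rfl⟩) | ⟨X, hX, rfl⟩)
    · exact ih hX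
    · obtain ⟨I, rfl⟩ := ih hX
      obtain ⟨J, rfl⟩ := ih hY
      exact ⟨.impl I J, rfl⟩
    · obtain ⟨I, rfl⟩ := ih hX
      exact ⟨.box I, rfl⟩
    · obtain ⟨I, rfl⟩ := ih hX
      exact ⟨.diam I, rfl⟩

theorem mem_definableSets_of_preserves_closed (hS : S.Finite) {F : Set PointedModel}
    (hF : ∀ p q, Preserves (definableSets boxOne S l) p q → p ∈ F → q ∈ F) :
    F ∈ definableSets boxOne S l :=
  mem_of_preserves_closed (isSublattice_definableSets boxOne S l)
    (finite_definableSets hS l) (empty_mem_definableSets boxOne S l)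
    (univ_mem_definableSets boxOne S l) hF

theorem setOf_preserves_mem_definableSets (hS : S.Finite) (p : PointedModel) :
    {q | Preserves (definableSets boxOne S l) p q} ∈ definableSets boxOne S l :=
  mem_definableSets_of_preserves_closed hS fun _ _ hqr hpq => hpq.trans hqr

theorem setOf_not_preserves_mem_definableSets (hS : S.Finite) (q : PointedModel) :
    {p | ¬ Preserves (definableSets boxOne S l) p q} ∈ definableSets boxOne S l :=
  mem_definableSets_of_preserves_closed hS fun _ _ hpr hpq hrq => hpq (hpr.trans hrq)

end DefinableSets

section BackAndForth

variable {boxOne : Bool} {S : Set ℕ} {l : ℕ} {N P : Model} {a : N.U} {b : P.U}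

/-- Every `R_◇`-successor of `a` is matched by one of `b` with at least the same definable
properties. -/
def DiamPreserves (boxOne : Bool) (S : Set ℕ) (l : ℕ) (N P : Model) (a : N.U) (b : P.U) : Prop :=
  ∀ c, N.relDiam a c →
    ∃ d, P.relDiam b d ∧ Preserves (definableSets boxOne S l) (N.pt c) (P.pt d)

theorem Preserves.exists_rel (hS : S.Finite)
    (hab : Preserves (definableSets boxOne S (l + 1)) (N.pt a) (P.pt b)) {d : P.U}
    (hbd : P.rel b d) :
    ∃ c, N.rel a c ∧ Preserves (definableSets boxOne S l) (N.pt c) (P.pt d) ∧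
      Preserves (definableSets boxOne S l) (P.pt d) (N.pt c) := by
  by_contra! hno
  let X : Set PointedModel := {p | Preserves (definableSets boxOne S l) (P.pt d) p}
  let Y : Set PointedModel := {p | ¬ Preserves (definableSets boxOne S l) p (P.pt d)}
  have hXY : impSet X Y ∈ definableSets boxOne S (l + 1) :=
    impSet_mem_definableSets (setOf_preserves_mem_definableSets hS _)
      (setOf_not_preserves_mem_definableSets hS _)
  have ha : N.pt a ∈ impSet X Y := fun c hac hdc hcd => hno c hac hcd hdc
  exact hab _ hXY ha d hbd (.refl _ _) (.refl _ _)

theorem Preserves.exists_boxRel (hS : S.Finite)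
    (hab : Preserves (definableSets boxOne S (l + 1)) (N.pt a) (P.pt b)) {f : P.U}
    (hbf : P.boxRel boxOne b f) :
    ∃ e, N.boxRel boxOne a e ∧ Preserves (definableSets boxOne S l) (N.pt e) (P.pt f) := by
  by_contra! hno
  let X : Set PointedModel := {p | ¬ Preserves (definableSets boxOne S l) p (P.pt f)}
  have hX : boxSet boxOne X ∈ definableSets boxOne S (l + 1) :=
    boxSet_mem_definableSets (setOf_not_preserves_mem_definableSets hS _)
  exact hab _ hX hno f hbf (.refl _ _)

theorem Preserves.exists_rel_diamPreserves (hS : S.Finite)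
    (hab : Preserves (definableSets boxOne S (l + 1)) (N.pt a) (P.pt b)) {d : P.U}
    (hbd : P.rel b d) :
    ∃ c, N.rel a c ∧ DiamPreserves boxOne S l N P c d := by
  by_contra! hno
  let X : Set PointedModel :=
    {p | ∀ f, P.relDiam d f → ¬ Preserves (definableSets boxOne S l) p (P.pt f)}
  have hX : diamSet X ∈ definableSets boxOne S (l + 1) :=
    diamSet_mem_definableSets <| mem_definableSets_of_preserves_closed hS
      fun _ _ hpq hp f hdf hqf => hp f hdf (hpq.trans hqf)
  have ha : N.pt a ∈ diamSet X := by
    intro c hac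
    simpa [DiamPreserves, X] using hno c hac
  obtain ⟨f, hdf, hf⟩ := hab _ hX ha d hbd
  exact hf f hdf (.refl _ _)

end BackAndForth

section LastRel

variable {α β : Type*} {Q : ℕ → α → β → Prop} {as : List α} {bs : List β} {a c e : α} {b d f : β}

/-- The relation between nonempty tuples of equal length `n` whose last entries are related
by `Q n`. -/
def LastRel (Q : ℕ → α → β → Prop) (as : List α) (bs : List β) : Prop :=
  as.length = bs.length ∧ ∃ a ∈ as.getLast?, ∃ b ∈ bs.getLast?, Q as.length a b

theorem lastRel_append_singleton :
    LastRel Q (as ++ [a]) (bs ++ [b]) ↔ as.length = bs.length ∧ Q (as.length + 1) a b := by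
  simp [LastRel]

theorem lastRel_append_pair :
    LastRel Q (as ++ [a, c]) (bs ++ [b, d]) ↔ as.length = bs.length ∧ Q (as.length + 2) c d := by
  simp [LastRel]

theorem lastRel_append_triple :
    LastRel Q (as ++ [a, c, e]) (bs ++ [b, d, f]) ↔
      as.length = bs.length ∧ Q (as.length + 3) e f := by
  simp [LastRel]

theorem typeCond_lastRel {N P : Model} (Q : ℕ → N.U → P.U → Prop) : TypeCond N P (LastRel Q) := by
  rintro as bs ⟨hlen, a, ha, -⟩
  refine ⟨?_, hlen⟩
  rintro rfl
  simp at ha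

end LastRel

section CanonicalAsimulation

variable {boxOne : Bool} {S : Set ℕ} {k : ℕ} {N P : Model}

/-- The first relation of the canonical `k`-asimulation. A tuple of `m + 1` points leaves
depth `k - m`. -/
def canonicalA (boxOne : Bool) (S : Set ℕ) (k : ℕ) (N P : Model) :
    List N.U → List P.U → Prop :=
  LastRel fun n a b => Preserves (definableSets boxOne S (k + 1 - n)) (N.pt a) (P.pt b)

/-- The second relation of the canonical `k`-asimulation. Its depth is the one that `canonicalA`
has after one more point. -/
def canonicalB (boxOne : Bool) (S : Set ℕ) (k : ℕ) (N P : Model) :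
    List N.U → List P.U → Prop :=
  LastRel fun n => DiamPreserves boxOne S (k - n) N P

theorem canonicalA_singleton {t : N.U} {u : P.U} :
    canonicalA boxOne S k N P [t] [u] ↔
      Preserves (definableSets boxOne S k) (N.pt t) (P.pt u) := by
  simp [canonicalA, LastRel]

theorem baseCond_canonicalA : BaseCond N P S (canonicalA boxOne S k N P) := by
  intro as bs a b hab n hn
  exact (lastRel_append_singleton.1 hab).2 _ (letterSet_mem_definableSets hn)

theorem stepCond_canonicalA (hS : S.Finite) :
    StepCond N P k (canonicalA boxOne S k N P) (canonicalA boxOne S k P N) := by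
  intro as bs a b d hab hbd hk
  obtain ⟨hlen, hpres⟩ := lastRel_append_singleton.1 hab
  obtain ⟨c, hac, hcd, hdc⟩ := (hpres.anti (monotone_definableSets boxOne S
    (by omega : k + 1 - (as.length + 2) + 1 ≤ _))).exists_rel hS hbd
  exact ⟨c, hac, lastRel_append_pair.2 ⟨hlen, hcd⟩,
    lastRel_append_pair.2 ⟨hlen.symm, hlen ▸ hdc⟩⟩

theorem box1Cond_canonicalA (hS : S.Finite) : Box1Cond N P k (canonicalA true S k N P) := by
  intro as bs a b d hab hbd hk
  obtain ⟨hlen, hpres⟩ := lastRel_append_singleton.1 hab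
  obtain ⟨c, hac, hcd⟩ := (hpres.anti (monotone_definableSets true S
    (by omega : k + 1 - (as.length + 2) + 1 ≤ _))).exists_boxRel hS hbd
  exact ⟨c, hac, lastRel_append_pair.2 ⟨hlen, hcd⟩⟩

theorem box2Cond_canonicalA (hS : S.Finite) : Box2Cond N P k (canonicalA false S k N P) := by
  intro as bs a b d f hab hbd hdf hk
  obtain ⟨hlen, hpres⟩ := lastRel_append_singleton.1 hab
  obtain ⟨e, ⟨c, hac, hce⟩, hef⟩ := (hpres.anti (monotone_definableSets false S
    (by omega : k + 1 - (as.length + 3) + 1 ≤ _))).exists_boxRel hS ⟨d, hbd, hdf⟩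
  exact ⟨c, e, hac, hce, lastRel_append_triple.2 ⟨hlen, hef⟩⟩

theorem diam2aCond_canonical (hS : S.Finite) :
    Diam2aCond N P k (canonicalA boxOne S k N P) (canonicalB boxOne S k N P) := by
  intro as bs a b d hab hbd hk
  obtain ⟨hlen, hpres⟩ := lastRel_append_singleton.1 hab
  obtain ⟨c, hac, hcd⟩ := (hpres.anti (monotone_definableSets boxOne S
    (by omega : k - (as.length + 2) + 1 ≤ _))).exists_rel_diamPreserves hS hbd
  exact ⟨c, hac, lastRel_append_pair.2 ⟨hlen, hcd⟩⟩

theorem diam2bCond_canonical :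
    Diam2bCond N P k (canonicalB boxOne S k N P) (canonicalA boxOne S k N P) := by
  intro as bs a c b hab hac _
  obtain ⟨hlen, hdiam⟩ := lastRel_append_singleton.1 hab
  obtain ⟨d, hbd, hcd⟩ := hdiam c hac
  exact ⟨d, hbd, lastRel_append_pair.2 ⟨hlen, by simpa only [Nat.add_sub_add_right] using hcd⟩⟩

theorem isKAsimD2_canonical (hS : S.Finite) {t : N.U} {u : P.U}
    (htu : Preserves (definableSets boxOne S k) (N.pt t) (P.pt u)) :
    IsKAsimD2 boxOne S N P t u k (canonicalA boxOne S k N P) (canonicalA boxOne S k P N)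
      (canonicalB boxOne S k N P) (canonicalB boxOne S k P N) := by
  refine ⟨typeCond_lastRel _, typeCond_lastRel _, typeCond_lastRel _, typeCond_lastRel _,
    canonicalA_singleton.2 htu, baseCond_canonicalA, baseCond_canonicalA,
    stepCond_canonicalA hS, stepCond_canonicalA hS, ?_,
    diam2aCond_canonical hS, diam2aCond_canonical hS, diam2bCond_canonical, diam2bCond_canonical⟩
  cases boxOne
  · exact ⟨box2Cond_canonicalA hS, box2Cond_canonicalA hS⟩
  · exact ⟨box1Cond_canonicalA hS, box1Cond_canonicalA hS⟩

end CanonicalAsimulation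

section FreeVariables

variable {M : Model}

theorem eqOn_update_of_eqOn_sdiff {α β : ℕ → M.U} {v : ℕ} {s : Finset ℕ}
    (h : Set.EqOn α β ↑(s \ {v})) (u : M.U) :
    Set.EqOn (Function.update α v u) (Function.update β v u) s := by
  intro w hw
  by_cases hwv : w = v
  · simp [hwv]
  · simpa [hwv] using h (by simpa [hwv] using hw)

theorem sat_congr {φ : FOForm} {α β : ℕ → M.U} (h : Set.EqOn α β φ.freeVars) :
    Sat M φ α ↔ Sat M φ β := by
  induction φ generalizing α β with
  | falsum => exact Iff.rfl
  | pred n v => rw [Sat, Sat, h (by simp [FOForm.freeVars])]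
  | rel s v w =>
    rw [Sat, Sat, h (by simp [FOForm.freeVars] : v ∈ _), h (by simp [FOForm.freeVars] : w ∈ _)]
  | conj f g ihf ihg =>
    exact and_congr (ihf (h.mono Finset.subset_union_left)) (ihg (h.mono Finset.subset_union_right))
  | disj f g ihf ihg =>
    exact or_congr (ihf (h.mono Finset.subset_union_left)) (ihg (h.mono Finset.subset_union_right))
  | impl f g ihf ihg =>
    exact imp_congr (ihf (h.mono Finset.subset_union_left)) (ihg (h.mono Finset.subset_union_right))
  | all v f ih => exact forall_congr' fun u => ih (eqOn_update_of_eqOn_sdiff h u)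
  | ex v f ih => exact exists_congr fun u => ih (eqOn_update_of_eqOn_sdiff h u)

theorem sat_iff_satAt {φ : FOForm} {x : ℕ} (hfv : φ.freeVars ⊆ {x}) (α : ℕ → M.U) :
    Sat M φ α ↔ SatAt M (α x) x φ := by
  refine ⟨fun hα β hβ => (sat_congr fun v hv => ?_).1 hα, fun h => h α rfl⟩
  rw [Finset.mem_singleton.1 (hfv hv), hβ]

end FreeVariables

theorem statement_12_general {boxOne : Bool} {φ : FOForm} {x k : ℕ} (hfv : φ.freeVars ⊆ {x})
    (h : KInvariantD2 boxOne x φ k) : ∃ I : MForm, Equiv φ (ST boxOne false I x) := by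
  let F : Set PointedModel := {p | SatAt p.1 p.2 x φ}
  have hS : (φ.predLetters : Set ℕ).Finite := φ.predLetters.finite_toSet
  have hF : F ∈ definableSets boxOne φ.predLetters k := by
    refine mem_definableSets_of_preserves_closed hS ?_
    rintro ⟨N, a⟩ ⟨P, b⟩ hab
    exact h _ subset_rfl N P a b _ _ _ _ (isKAsimD2_canonical hS hab) a b
      (canonicalA_singleton.2 hab)
  obtain ⟨I, hI⟩ := definableSets_subset_range_extension boxOne _ k hF
  refine ⟨I, fun M α => ?_⟩
  rw [sat_ST_iff_mem_extension, hI]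
  exact sat_iff_satAt hfv α

/-- **Key Lemma 2 (case (2,2)).**  If k = r(φ(x)) and φ(x) is invariant with
respect to (2,2)-modal k-asimulations, then φ(x) is logically equivalent to a
(2,2)-standard x-translation of a modal intuitionistic formula. -/
theorem statement_12 (φ : FOForm) (x : ℕ) (hfv : φ.freeVars ⊆ {x})
    (h : KInvariantD2 false x φ φ.degree) :
    ∃ I : MForm, Equiv φ (ST false false I x) :=
  statement_12_general hfv h

end ModalIntAsim
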